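/- Let E be a finite set and let F : 2^E → ℝ be a monotone set function with multilinear extension f. Then f is monotone on [0,1]^E: every partial derivative ∂f/∂x(e) is nonnegative at every point of [0,1]^E, and in particular f(x) ≤ f(y) whenever x, y ∈ [0,1]^E satisfy x(e) ≤ y(e) for all e ∈ E. -/

import Mathlib

open Finset

/-- The multilinear extension of a set function `F : 2^E → ℝ`. -/
noncomputable def multilinearExt {E : Type*} [Fintype E] [DecidableEq E]
    (F : Finset E → ℝ) (x : E → ℝ) : ℝ :=
  ∑ S : Finset E, F S * (∏ e ∈ S, x e) * ∏ e ∈ Sᶜ, (1 - x e)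

/-- The partial derivative `∂f/∂x(e)` of the multilinear extension at `x`. -/
noncomputable def multilinearGrad {E : Type*} [Fintype E] [DecidableEq E]
    (F : Finset E → ℝ) (x : E → ℝ) (e : E) : ℝ :=
  deriv (fun t => multilinearExt F (Function.update x e t)) (x e)

/-! On the cube, `multilinearExt F x` is the expectation of `F R`, where the random set `R`
contains each `i` independently with probability `x i`. Conditioning on whether `e ∈ R` shows that
it is affine in `x e`, with slope the expectation of `F (insert e R) - F (R.erase e)`, which is
nonnegative when `F` is monotone. It remains to raise the coordinates from `x` to `y` one at a
time. -/

section Coordinatewise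

variable {ι β : Type*} {α : ι → Type*} [Finite ι] [DecidableEq ι] [∀ i, Preorder (α i)]
  [Preorder β] {f : (∀ i, α i) → β} {t : ∀ i, Set (α i)}

theorem monotoneOn_univ_pi_of_le_update
    (hf : ∀ x ∈ Set.univ.pi t, ∀ i, ∀ a ∈ t i, x i ≤ a → f x ≤ f (Function.update x i a)) :
    MonotoneOn f (Set.univ.pi t) := by
  intro x hx y hy hxy
  cases nonempty_fintype ι
  suffices le_piecewise : ∀ s : Finset ι, f x ≤ f (s.piecewise y x) by
    simpa only [piecewise_univ] using le_piecewise univ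
  intro s
  induction s using Finset.induction_on with
  | empty => rw [piecewise_empty]
  | insert i s hi ih =>
    have piecewise_mem : s.piecewise y x ∈ Set.univ.pi t := fun j _ =>
      s.piecewise_cases y x (· ∈ t j) (hy j trivial) (hx j trivial)
    have piecewise_apply_le : s.piecewise y x i ≤ y i := by
      rw [piecewise_eq_of_notMem s y x hi]
      exact hxy i
    rw [piecewise_insert]
    exact ih.trans (hf _ piecewise_mem i _ (hy i trivial) piecewise_apply_le)

end Coordinatewise

section MultilinearExt

variable {E : Type*} [Fintype E] [DecidableEq E] {F G : Finset E → ℝ} {x : E → ℝ} {e : E}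

theorem multilinearExt_eq_sum_powerset_erase (F : Finset E → ℝ) (x : E → ℝ) (e : E) :
    multilinearExt F x = ∑ S ∈ (univ.erase e).powerset,
      ((1 - x e) * F S + x e * F (insert e S)) *
        ((∏ i ∈ S, x i) * ∏ i ∈ Sᶜ.erase e, (1 - x i)) := by
  rw [multilinearExt, ← powerset_univ, ← insert_erase (mem_univ e),
    sum_powerset_insert (notMem_erase e univ), ← sum_add_distrib, insert_erase (mem_univ e)]
  refine sum_congr rfl fun S hS => ?_
  have e_notMem : e ∉ S := fun h => notMem_erase e univ (mem_powerset.1 hS h)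
  rw [compl_insert, prod_insert e_notMem, ← mul_prod_erase Sᶜ _ (mem_compl.2 e_notMem)]
  ring

theorem multilinearExt_update (F : Finset E → ℝ) (x : E → ℝ) (e : E) (t : ℝ) :
    multilinearExt F (Function.update x e t) =
      (1 - t) * multilinearExt (fun S => F (S.erase e)) x +
        t * multilinearExt (fun S => F (insert e S)) x := by
  simp only [multilinearExt_eq_sum_powerset_erase _ _ e, mul_sum, ← sum_add_distrib]
  refine sum_congr rfl fun S hS => ?_
  have e_notMem : e ∉ S := fun h => notMem_erase e univ (mem_powerset.1 hS h)
  have prod_one_sub_update :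
      ∏ i ∈ Sᶜ.erase e, (1 - Function.update x e t i) = ∏ i ∈ Sᶜ.erase e, (1 - x i) :=
    prod_congr rfl fun i hi => by rw [Function.update_of_ne (ne_of_mem_erase hi)]
  rw [prod_update_of_notMem e_notMem, prod_one_sub_update, Function.update_self,
    erase_eq_of_notMem e_notMem, erase_insert e_notMem, insert_idem]
  ring

theorem hasDerivAt_multilinearExt_update (F : Finset E → ℝ) (x : E → ℝ) (e : E) (t : ℝ) :
    HasDerivAt (fun t => multilinearExt F (Function.update x e t))
      (multilinearExt (fun S => F (insert e S)) x - multilinearExt (fun S => F (S.erase e)) x)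
      t := by
  simp only [multilinearExt_update]
  exact ((((hasDerivAt_id t).const_sub 1).mul_const _).add
    ((hasDerivAt_id t).mul_const _)).congr_deriv (by ring)

theorem multilinearGrad_eq_sub (F : Finset E → ℝ) (x : E → ℝ) (e : E) :
    multilinearGrad F x e =
      multilinearExt (fun S => F (insert e S)) x - multilinearExt (fun S => F (S.erase e)) x :=
  (hasDerivAt_multilinearExt_update F x e (x e)).deriv

theorem multilinearExt_le_multilinearExt (hFG : F ≤ G) (hx : x ∈ Set.Icc 0 1) :
    multilinearExt F x ≤ multilinearExt G x := by
  have prod_nonneg (S : Finset E) : 0 ≤ ∏ i ∈ S, x i :=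
    Finset.prod_nonneg fun i _ => hx.1 i
  have prod_one_sub_nonneg (S : Finset E) : 0 ≤ ∏ i ∈ S, (1 - x i) :=
    Finset.prod_nonneg fun i _ => sub_nonneg.2 (hx.2 i)
  exact sum_le_sum fun S _ => mul_le_mul_of_nonneg_right
    (mul_le_mul_of_nonneg_right (hFG S) (prod_nonneg S)) (prod_one_sub_nonneg Sᶜ)

theorem multilinearGrad_nonneg (hF : ∀ S, F S ≤ F (insert e S)) (hx : x ∈ Set.Icc 0 1) :
    0 ≤ multilinearGrad F x e := by
  have erase_le_insert : (fun S => F (S.erase e)) ≤ fun S => F (insert e S) := fun S =>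
    have insert_erase_eq : insert e (S.erase e) = insert e S := by grind
    (hF (S.erase e)).trans_eq (congrArg F insert_erase_eq)
  rw [multilinearGrad_eq_sub, sub_nonneg]
  exact multilinearExt_le_multilinearExt erase_le_insert hx

theorem monotone_multilinearExt_update (hF : ∀ S, F S ≤ F (insert e S)) (hx : x ∈ Set.Icc 0 1) :
    Monotone fun t => multilinearExt F (Function.update x e t) := by
  refine monotone_of_hasDerivAt_nonneg (hasDerivAt_multilinearExt_update F x e) fun _ => ?_
  rw [← multilinearGrad_eq_sub]
  exact multilinearGrad_nonneg hF hx

theorem monotoneOn_multilinearExt (hF : Monotone F) :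
    MonotoneOn (multilinearExt F) (Set.Icc 0 1) := by
  rw [← Set.pi_univ_Icc]
  refine monotoneOn_univ_pi_of_le_update fun x hx e a _ hxa => ?_
  rw [Set.pi_univ_Icc] at hx
  simpa only [Function.update_eq_self] using
    monotone_multilinearExt_update (fun S => hF (subset_insert e S)) hx hxa

end MultilinearExt

/-- If `F : 2^E → ℝ` is monotone, then its multilinear extension `f` is monotone on
`[0,1]^E`: all partial derivatives are nonnegative there, and `f(x) ≤ f(y)` whenever
`x ≤ y` coordinatewise in `[0,1]^E`. -/
theorem multilinearExt_monotone {E : Type*} [Fintype E] [DecidableEq E]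
    (F : Finset E → ℝ)
    (hmono : ∀ S T : Finset E, S ⊆ T → F S ≤ F T) :
    (∀ x : E → ℝ, (∀ e, x e ∈ Set.Icc (0 : ℝ) 1) → ∀ e, 0 ≤ multilinearGrad F x e) ∧
    (∀ x y : E → ℝ, (∀ e, x e ∈ Set.Icc (0 : ℝ) 1) → (∀ e, y e ∈ Set.Icc (0 : ℝ) 1) →
      (∀ e, x e ≤ y e) → multilinearExt F x ≤ multilinearExt F y) := by
  have mem_cube (z : E → ℝ) (hz : ∀ e, z e ∈ Set.Icc (0 : ℝ) 1) : z ∈ Set.Icc 0 1 :=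
    ⟨fun e => (hz e).1, fun e => (hz e).2⟩
  have hF : Monotone F := fun S T => hmono S T
  exact ⟨fun x hx e => multilinearGrad_nonneg (fun S => hF (subset_insert e S)) (mem_cube x hx),
    fun x y hx hy hxy => monotoneOn_multilinearExt hF (mem_cube x hx) (mem_cube y hy) hxy⟩
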